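/- Let k ≥ 2, r ≥ 1, let G = (N^k, Θ) be a downward directed graph, F a partial selection function, D ⊆ N^k finite, ρ_D : D → N with ρ_D(x) ≥ min(x) for all x, and let E ⊆ N with E^k ⊆ D and h^ρ_D regressively regular over E. Define E^k_L = {x ∈ E^k : h^ρ_D(x) < min(E)}, E^k_U = {x ∈ E^k : h^ρ_D(x) ≥ min(x)}, E^k_{≠∅} = {x ∈ E^k : Φ^D_x ≠ ∅} and E^k_∅ = {x ∈ E^k : Φ^D_x = ∅}. Then E^k_L ⊆ E^k_{≠∅}, and either diag(E^k) = {(e,...,e) : e ∈ E} ⊆ E^k_∅ or diag(E^k) ⊆ E^k_L. -/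

import Mathlib

open scoped Classical

/-- The maximum coordinate of a `k`-tuple of nonnegative integers. -/
def maxv {k : ℕ} (z : Fin k → ℕ) : ℕ := Finset.univ.sup z

/-- The minimum coordinate of a `k`-tuple of nonnegative integers. -/
noncomputable def minv {k : ℕ} (z : Fin k → ℕ) : ℕ := sInf (Set.range z)

/-- A directed graph `(N^k, Θ)` is downward directed if every edge `(x, y)`
satisfies `max(x) > max(y)`. -/
def Downward {k : ℕ} (Θ : Set ((Fin k → ℕ) × (Fin k → ℕ))) : Prop :=
  ∀ e ∈ Θ, maxv e.2 < maxv e.1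

/-- Two `k`-tuples are order equivalent if they have the same order type:
corresponding coordinates compare the same way. -/
def OrdEquiv {k : ℕ} (x y : Fin k → ℕ) : Prop :=
  ∀ i j : Fin k, (x i < x j ↔ y i < y j) ∧ (x i = x j ↔ y i = y j)

/-- `f` is regressively regular over `E`: for each order type of `k`-tuples,
either `f(x) = f(y) < min(E)` for all `x, y ∈ E^k` of that order type, or
`f(x) ≥ min(x)` for all `x ∈ E^k` of that order type. -/
def RegReg {k : ℕ} (f : (Fin k → ℕ) → ℕ) (E : Set ℕ) : Prop :=
  ∀ x : Fin k → ℕ, (∀ i, x i ∈ E) →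
    (∀ y : Fin k → ℕ, (∀ i, y i ∈ E) → OrdEquiv x y → f y = f x ∧ f x < sInf E) ∨
    (∀ y : Fin k → ℕ, (∀ i, y i ∈ E) → OrdEquiv x y → minv y ≤ f y)

/-- One step of the recursion defining `Φ^D_z`: given the pair
`prev y = (value at y, Φ^D_y ≠ ∅)` for vertices `y` below `z`, this is the set of
defined values `F[z, (y_1,n_1), …, (y_r,n_r)]` with each `y_i ∈ G_D^z` and
`n_i = prev(y_i).1` if `Φ^D_{y_i} ≠ ∅`, `n_i = min(y_i)` if `Φ^D_{y_i} = ∅`. -/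
def PhiStep {k r : ℕ} (Θ : Set ((Fin k → ℕ) × (Fin k → ℕ))) (D : Set (Fin k → ℕ))
    (F : (Fin k → ℕ) → (Fin r → (Fin k → ℕ) × ℕ) → Option ℕ)
    (prev : (Fin k → ℕ) → ℕ × Prop) (z : Fin k → ℕ) : Set ℕ :=
  {n | ∃ w : Fin r → (Fin k → ℕ) × ℕ,
    (∀ i : Fin r, (z ∈ D ∧ (w i).1 ∈ D ∧ (z, (w i).1) ∈ Θ) ∧
      (w i).2 = if (prev ((w i).1)).2 then (prev ((w i).1)).1 else minv ((w i).1)) ∧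
    F z w = some n}

/-- Fuel-based recursion computing `(ŝ_D(z), Φ^D_z ≠ ∅)`; since `G` is downward
directed, fuel `max(z)` suffices, see `sD` and `PhiNEs`. -/
noncomputable def sAuxN {k r : ℕ} (Θ : Set ((Fin k → ℕ) × (Fin k → ℕ)))
    (D : Set (Fin k → ℕ)) (F : (Fin k → ℕ) → (Fin r → (Fin k → ℕ) × ℕ) → Option ℕ) :
    ℕ → (Fin k → ℕ) → ℕ × Prop
  | 0, z =>
      (if (PhiStep Θ D F (fun y => (maxv y, False)) z).Nonempty then
        sInf (PhiStep Θ D F (fun y => (maxv y, False)) z)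
      else maxv z,
      (PhiStep Θ D F (fun y => (maxv y, False)) z).Nonempty)
  | (m + 1), z =>
      (if (PhiStep Θ D F (sAuxN Θ D F m) z).Nonempty then
        sInf (PhiStep Θ D F (sAuxN Θ D F m) z)
      else maxv z,
      (PhiStep Θ D F (sAuxN Θ D F m) z).Nonempty)

/-- `ŝ_D(z)`: `max(z)` if `Φ^D_z = ∅`, else `min(Φ^D_z)`. -/
noncomputable def sD {k r : ℕ} (Θ : Set ((Fin k → ℕ) × (Fin k → ℕ)))
    (D : Set (Fin k → ℕ)) (F : (Fin k → ℕ) → (Fin r → (Fin k → ℕ) × ℕ) → Option ℕ)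
    (z : Fin k → ℕ) : ℕ :=
  (sAuxN Θ D F (maxv z) z).1

/-- The statement `Φ^D_z ≠ ∅` (computed along the recursion for `ŝ_D`). -/
def PhiNEs {k r : ℕ} (Θ : Set ((Fin k → ℕ) × (Fin k → ℕ)))
    (D : Set (Fin k → ℕ)) (F : (Fin k → ℕ) → (Fin r → (Fin k → ℕ) × ℕ) → Option ℕ)
    (z : Fin k → ℕ) : Prop :=
  (sAuxN Θ D F (maxv z) z).2

/-- The set `Φ^D_z` for the recursion defining `ŝ_D`. -/
def PhiD {k r : ℕ} (Θ : Set ((Fin k → ℕ) × (Fin k → ℕ)))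
    (D : Set (Fin k → ℕ)) (F : (Fin k → ℕ) → (Fin r → (Fin k → ℕ) × ℕ) → Option ℕ)
    (z : Fin k → ℕ) : Set ℕ :=
  PhiStep Θ D F (fun y => (sD Θ D F y, PhiNEs Θ D F y)) z

/-- Fuel-based recursion computing `(h^ρ_D(z), Φ^D_z ≠ ∅)`: same recursion as for
`ŝ_D` except that the value is `ρ(z)` when `Φ^D_z = ∅`. -/
noncomputable def hAuxN {k r : ℕ} (Θ : Set ((Fin k → ℕ) × (Fin k → ℕ)))
    (D : Set (Fin k → ℕ)) (F : (Fin k → ℕ) → (Fin r → (Fin k → ℕ) × ℕ) → Option ℕ)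
    (ρ : (Fin k → ℕ) → ℕ) : ℕ → (Fin k → ℕ) → ℕ × Prop
  | 0, z =>
      (if (PhiStep Θ D F (fun y => (maxv y, False)) z).Nonempty then
        sInf (PhiStep Θ D F (fun y => (maxv y, False)) z)
      else ρ z,
      (PhiStep Θ D F (fun y => (maxv y, False)) z).Nonempty)
  | (m + 1), z =>
      (if (PhiStep Θ D F (hAuxN Θ D F ρ m) z).Nonempty then
        sInf (PhiStep Θ D F (hAuxN Θ D F ρ m) z)
      else ρ z,
      (PhiStep Θ D F (hAuxN Θ D F ρ m) z).Nonempty)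

/-- `h^ρ_D(z)`: `ρ(z)` if `Φ^D_z = ∅`, else `min(Φ^D_z)`. -/
noncomputable def hRD {k r : ℕ} (Θ : Set ((Fin k → ℕ) × (Fin k → ℕ)))
    (D : Set (Fin k → ℕ)) (F : (Fin k → ℕ) → (Fin r → (Fin k → ℕ) × ℕ) → Option ℕ)
    (ρ : (Fin k → ℕ) → ℕ) (z : Fin k → ℕ) : ℕ :=
  (hAuxN Θ D F ρ (maxv z) z).1

/-- The statement `Φ^D_z ≠ ∅` (computed along the recursion for `h^ρ_D`). -/
def PhiNEh {k r : ℕ} (Θ : Set ((Fin k → ℕ) × (Fin k → ℕ)))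
    (D : Set (Fin k → ℕ)) (F : (Fin k → ℕ) → (Fin r → (Fin k → ℕ) × ℕ) → Option ℕ)
    (ρ : (Fin k → ℕ) → ℕ) (z : Fin k → ℕ) : Prop :=
  (hAuxN Θ D F ρ (maxv z) z).2

/-- The set `Φ^D_z` for the recursion defining `h^ρ_D`. -/
def PhiDh {k r : ℕ} (Θ : Set ((Fin k → ℕ) × (Fin k → ℕ)))
    (D : Set (Fin k → ℕ)) (F : (Fin k → ℕ) → (Fin r → (Fin k → ℕ) × ℕ) → Option ℕ)
    (ρ : (Fin k → ℕ) → ℕ) (z : Fin k → ℕ) : Set ℕ :=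
  PhiStep Θ D F (fun y => (hRD Θ D F ρ y, PhiNEh Θ D F ρ y)) z

/-!
Every element of `Φ_z` is one of the numbers `n_i` attached to a vertex `y_i` below `z`. That number
is either `min(y_i)` or an element of `Φ_{y_i}`, so by induction along the graph all elements of
`Φ_z` are `< max(z)`. At a diagonal tuple with `Φ ≠ ∅` this reads `h(e, …, e) < e = min(e, …, e)`,
which is incompatible with the second alternative of regressive regularity; since all diagonal
tuples have the same order type, one alternative governs the whole diagonal. On the other hand,
`Φ_z = ∅` forces `h(z) = ρ(z) ≥ min(z) ≥ min(E)`.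
-/

/-- `F` is a partial selection function: each defined value is one of the numbers `n_i` among its
arguments `(y_1, n_1), …, (y_r, n_r)`. Undefined values are encoded by `none`. -/
def IsPartialSelection {k r : ℕ} (F : (Fin k → ℕ) → (Fin r → (Fin k → ℕ) × ℕ) → Option ℕ) : Prop :=
  ∀ z w n, F z w = some n → ∃ i : Fin r, n = (w i).2

/-- One step of the recursion for `h^ρ_D`: the pair `(h^ρ_D(z), Φ^D_z ≠ ∅)` computed from such
pairs `prev y` at the vertices `y` below `z`. -/
noncomputable def hStep {k r : ℕ} (Θ : Set ((Fin k → ℕ) × (Fin k → ℕ))) (D : Set (Fin k → ℕ))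
    (F : (Fin k → ℕ) → (Fin r → (Fin k → ℕ) × ℕ) → Option ℕ) (ρ : (Fin k → ℕ) → ℕ)
    (prev : (Fin k → ℕ) → ℕ × Prop) (z : Fin k → ℕ) : ℕ × Prop :=
  (if (PhiStep Θ D F prev z).Nonempty then sInf (PhiStep Θ D F prev z) else ρ z,
    (PhiStep Θ D F prev z).Nonempty)

section Tuples

variable {k : ℕ}

theorem ordEquiv_const (a b : ℕ) : OrdEquiv (fun _ : Fin k => a) (fun _ => b) := by
  intro i j
  simp

theorem maxv_const_le (a : ℕ) : maxv (fun _ : Fin k => a) ≤ a :=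
  Finset.sup_le fun _ _ => le_rfl

variable [NeZero k]

theorem minv_const (a : ℕ) : minv (fun _ : Fin k => a) = a := by
  rw [minv, Set.range_const, csInf_singleton]

theorem minv_le_maxv (z : Fin k → ℕ) : minv z ≤ maxv z :=
  (Nat.sInf_le (Set.mem_range_self 0)).trans (Finset.le_sup (Finset.mem_univ 0))

theorem sInf_le_minv {E : Set ℕ} {z : Fin k → ℕ} (hz : ∀ i, z i ∈ E) : sInf E ≤ minv z :=
  le_csInf (Set.range_nonempty z) (Set.forall_mem_range.2 fun i => Nat.sInf_le (hz i))

theorem RegReg.diag_lt_sInf_or_le {f : (Fin k → ℕ) → ℕ} {E : Set ℕ} (hf : RegReg f E) :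
    (∀ e ∈ E, f (fun _ => e) < sInf E) ∨ ∀ e ∈ E, e ≤ f (fun _ => e) := by
  rcases E.eq_empty_or_nonempty with rfl | ⟨a, ha⟩
  · simp
  refine (hf (fun _ => a) fun _ => ha).imp (fun hlt e he => ?_) (fun hle e he => ?_)
  · obtain ⟨heq, ha_lt⟩ := hlt (fun _ => e) (fun _ => he) (ordEquiv_const a e)
    exact heq.trans_lt ha_lt
  · exact (minv_const e).ge.trans (hle (fun _ => e) (fun _ => he) (ordEquiv_const a e))

end Tuples

section Recursion

variable {k r : ℕ} {Θ : Set ((Fin k → ℕ) × (Fin k → ℕ))} {D : Set (Fin k → ℕ)}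
  {F : (Fin k → ℕ) → (Fin r → (Fin k → ℕ) × ℕ) → Option ℕ} {ρ : (Fin k → ℕ) → ℕ}
  {z : Fin k → ℕ}

theorem phiStep_congr (hΘ : Downward Θ) {p q : (Fin k → ℕ) → ℕ × Prop}
    (hpq : ∀ y, maxv y < maxv z → p y = q y) : PhiStep Θ D F p z = PhiStep Θ D F q z := by
  ext n
  refine exists_congr fun w => and_congr_left' (forall_congr' fun i => and_congr_right ?_)
  rintro ⟨-, -, hedge⟩
  rw [hpq _ (hΘ _ hedge)]

theorem hStep_congr (hΘ : Downward Θ) {p q : (Fin k → ℕ) → ℕ × Prop}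
    (hpq : ∀ y, maxv y < maxv z → p y = q y) : hStep Θ D F ρ p z = hStep Θ D F ρ q z := by
  rw [hStep, hStep, phiStep_congr hΘ hpq]

theorem hAuxN_eq_hStep (hΘ : Downward Θ) {m : ℕ} (hz : maxv z ≤ m) :
    hAuxN Θ D F ρ m z = hStep Θ D F ρ (fun y => hAuxN Θ D F ρ (maxv y) y) z := by
  induction m using Nat.strong_induction_on generalizing z with
  | _ m ih =>
    cases m with
    | zero => exact hStep_congr hΘ fun y hy => absurd hy (by omega)
    | succ m =>
      exact hStep_congr hΘ fun y hy =>
        (ih m m.lt_succ_self (by omega)).trans (ih (maxv y) (by omega) le_rfl).symm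

theorem hRD_phiNEh_eq (hΘ : Downward Θ) (z : Fin k → ℕ) :
    (hRD Θ D F ρ z, PhiNEh Θ D F ρ z) =
      (if (PhiDh Θ D F ρ z).Nonempty then sInf (PhiDh Θ D F ρ z) else ρ z,
        (PhiDh Θ D F ρ z).Nonempty) :=
  hAuxN_eq_hStep hΘ le_rfl

theorem phiNEh_iff (hΘ : Downward Θ) : PhiNEh Θ D F ρ z ↔ (PhiDh Θ D F ρ z).Nonempty :=
  (congrArg Prod.snd (hRD_phiNEh_eq hΘ z)).to_iff

theorem hRD_mem_phiDh (hΘ : Downward Θ) (hne : (PhiDh Θ D F ρ z).Nonempty) :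
    hRD Θ D F ρ z ∈ PhiDh Θ D F ρ z := by
  have hval : hRD Θ D F ρ z = sInf (PhiDh Θ D F ρ z) :=
    (congrArg Prod.fst (hRD_phiNEh_eq hΘ z)).trans (if_pos hne)
  exact hval ▸ Nat.sInf_mem hne

theorem hRD_eq_of_phiDh_eq_empty (hΘ : Downward Θ) (hempty : PhiDh Θ D F ρ z = ∅) :
    hRD Θ D F ρ z = ρ z :=
  (congrArg Prod.fst (hRD_phiNEh_eq hΘ z)).trans (if_neg (Set.not_nonempty_iff_eq_empty.2 hempty))

theorem phiDh_nonempty_of_hRD_lt_minv (hΘ : Downward Θ) (hρ : minv z ≤ ρ z)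
    (hlt : hRD Θ D F ρ z < minv z) : (PhiDh Θ D F ρ z).Nonempty := by
  by_contra hne
  rw [hRD_eq_of_phiDh_eq_empty hΘ (Set.not_nonempty_iff_eq_empty.1 hne)] at hlt
  exact hρ.not_gt hlt

variable [NeZero k]

theorem lt_maxv_of_mem_phiDh (hΘ : Downward Θ) (hF : IsPartialSelection F) {n : ℕ}
    (hn : n ∈ PhiDh Θ D F ρ z) : n < maxv z := by
  induction z using (measure maxv).wf.induction generalizing n with
  | _ z ih =>
    obtain ⟨w, hw, hFn⟩ := hn
    obtain ⟨i, rfl⟩ := hF z w n hFn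
    obtain ⟨⟨-, -, hedge⟩, hval⟩ := hw i
    have hlt : maxv (w i).1 < maxv z := hΘ _ hedge
    rw [hval]
    split_ifs with hne
    · exact (ih _ hlt (hRD_mem_phiDh hΘ ((phiNEh_iff hΘ).1 hne))).trans hlt
    · exact (minv_le_maxv _).trans_lt hlt

theorem phiDh_const_eq_empty_of_le_hRD (hΘ : Downward Θ) (hF : IsPartialSelection F) {e : ℕ}
    (he : e ≤ hRD Θ D F ρ fun _ => e) : PhiDh Θ D F ρ (fun _ => e) = ∅ := by
  by_contra hne
  have hmem := hRD_mem_phiDh hΘ (Set.nonempty_iff_ne_empty.2 hne)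
  exact he.not_gt ((lt_maxv_of_mem_phiDh hΘ hF hmem).trans_le (maxv_const_le e))

theorem stmt10_general (hΘ : Downward Θ) (hF : IsPartialSelection F)
    (hρ : ∀ x ∈ D, minv x ≤ ρ x) {E : Set ℕ} (hED : ∀ z : Fin k → ℕ, (∀ i, z i ∈ E) → z ∈ D)
    (hreg : RegReg (hRD Θ D F ρ) E) :
    (∀ z : Fin k → ℕ, (∀ i, z i ∈ E) → hRD Θ D F ρ z < sInf E →
      (PhiDh Θ D F ρ z).Nonempty) ∧
    ((∀ e ∈ E, PhiDh Θ D F ρ (fun _ : Fin k => e) = ∅) ∨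
      (∀ e ∈ E, hRD Θ D F ρ (fun _ : Fin k => e) < sInf E)) := by
  constructor
  · intro z hz hlt
    exact phiDh_nonempty_of_hRD_lt_minv hΘ (hρ z (hED z hz)) (hlt.trans_le (sInf_le_minv hz))
  · rcases hreg.diag_lt_sInf_or_le with hL | hU
    · exact Or.inr hL
    · exact Or.inl fun e he => phiDh_const_eq_empty_of_le_hRD hΘ hF (hU e he)

end Recursion

/-- with `h^ρ_D` regressively regular over `E` (`E^k ⊆ D`),
one has `E^k_L ⊆ E^k_{≠∅}`, and either `diag(E^k) ⊆ E^k_∅` or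
`diag(E^k) ⊆ E^k_L`. -/
theorem stmt10 (k r : ℕ) (hk : 2 ≤ k) (hr : 1 ≤ r)
    (Θ : Set ((Fin k → ℕ) × (Fin k → ℕ))) (hΘ : Downward Θ)
    (F : (Fin k → ℕ) → (Fin r → (Fin k → ℕ) × ℕ) → Option ℕ)
    (hF : ∀ z w n, F z w = some n → ∃ i : Fin r, n = (w i).2)
    (D : Set (Fin k → ℕ)) (hD : D.Finite)
    (ρ : (Fin k → ℕ) → ℕ) (hρ : ∀ x ∈ D, minv x ≤ ρ x)
    (E : Set ℕ) (hED : ∀ z : Fin k → ℕ, (∀ i, z i ∈ E) → z ∈ D)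
    (hreg : RegReg (hRD Θ D F ρ) E) :
    (∀ z : Fin k → ℕ, (∀ i, z i ∈ E) → hRD Θ D F ρ z < sInf E →
      (PhiDh Θ D F ρ z).Nonempty) ∧
    ((∀ e ∈ E, PhiDh Θ D F ρ (fun _ : Fin k => e) = ∅) ∨
      (∀ e ∈ E, hRD Θ D F ρ (fun _ : Fin k => e) < sInf E)) := by
  have : NeZero k := ⟨by omega⟩
  exact stmt10_general hΘ hF hρ hED hreg
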